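/- arXiv:1501.00175 — 5 statements merged into one kernel-verified Lean document; each statement's English description precedes it below -/
import Mathlib

section
/- The fifteen-node wedge shape functions reproduce affine fields: for every affine map L : ℝ³ → ℝ and every x ∈ ℝ³, Σ_{i=1}^{15} φ^i(x) · L(n_i) = L(x). -/
open MeasureTheory MvPolynomial

/-- The fifteen shape functions of the 15-node wedge element, in natural
coordinates `x = (ξ, η, ζ)` with `ξ = x 0`, `η = x 1`, `ζ = x 2`. -/
noncomputable def wedgeShape : Fin 15 → (Fin 3 → ℝ) → ℝ :=
  ![fun x => -((1 - x 0 - x 1) * (1 - x 2) * (2 * x 0 + 2 * x 1 + x 2)) / 2,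
    fun x => x 0 * (1 - x 2) * (2 * x 0 - x 2 - 2) / 2,
    fun x => x 1 * (1 - x 2) * (2 * x 1 - x 2 - 2) / 2,
    fun x => -((1 - x 0 - x 1) * (1 + x 2) * (2 * x 0 + 2 * x 1 - x 2)) / 2,
    fun x => x 0 * (1 + x 2) * (2 * x 0 + x 2 - 2) / 2,
    fun x => x 1 * (1 + x 2) * (2 * x 1 + x 2 - 2) / 2,
    fun x => 2 * x 0 * (1 - x 0 - x 1) * (1 - x 2),
    fun x => 2 * x 0 * x 1 * (1 - x 2),
    fun x => 2 * x 1 * (1 - x 0 - x 1) * (1 - x 2),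
    fun x => 2 * x 0 * (1 - x 0 - x 1) * (1 + x 2),
    fun x => 2 * x 0 * x 1 * (1 + x 2),
    fun x => 2 * x 1 * (1 - x 0 - x 1) * (1 + x 2),
    fun x => (1 - x 0 - x 1) * (1 - x 2 ^ 2),
    fun x => x 0 * (1 - x 2 ^ 2),
    fun x => x 1 * (1 - x 2 ^ 2)]

/-- Natural coordinates of the fifteen nodes of the wedge element. -/
noncomputable def wedgeNode : Fin 15 → Fin 3 → ℝ :=
  ![![0, 0, -1], ![1, 0, -1], ![0, 1, -1],
    ![0, 0, 1], ![1, 0, 1], ![0, 1, 1],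
    ![1/2, 0, -1], ![1/2, 1/2, -1], ![0, 1/2, -1],
    ![1/2, 0, 1], ![1/2, 1/2, 1], ![0, 1/2, 1],
    ![0, 0, 0], ![1, 0, 0], ![0, 1, 0]]

/-- Reference domain of the fifteen-node wedge element. -/
def wedgeDomain : Set (Fin 3 → ℝ) :=
  {x | 0 ≤ x 0 ∧ 0 ≤ x 1 ∧ x 0 + x 1 ≤ 1 ∧ -1 ≤ x 2 ∧ x 2 ≤ 1}

/-- Linear-metric (LM) interpolation functions. -/
noncomputable def phiLM : Fin 4 → (Fin 3 → ℝ) → ℝ :=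
  ![fun x => 83/12 - 10 * x 0 - 10 * x 1 - 10 * x 2,
    fun x => -37/12 + 10 * x 0,
    fun x => -37/12 + 10 * x 1,
    fun x => 1/4 + 10 * x 2]

/-- The four LM evaluation points. -/
noncomputable def ptLM : Fin 4 → Fin 3 → ℝ :=
  ![![37/120, 37/120, -1/40], ![49/120, 37/120, -1/40],
    ![37/120, 49/120, -1/40], ![37/120, 37/120, 3/40]]

/-- Quadratic-metric (QM) interpolation functions. -/
noncomputable def phiQM : Fin 10 → (Fin 3 → ℝ) → ℝ :=
  ![fun x => 6391/72 - (800/3) * x 0 - (800/3) * x 1 - (800/3) * x 2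
      + 400 * x 0 * x 1 + 400 * x 0 * x 2 + 400 * x 1 * x 2
      + 200 * x 0 ^ 2 + 200 * x 1 ^ 2 + 200 * x 2 ^ 2,
    fun x => 1591/72 - (400/3) * x 0 + 200 * x 0 ^ 2,
    fun x => 1591/72 - (400/3) * x 1 + 200 * x 1 ^ 2,
    fun x => -1/8 + 200 * x 2 ^ 2,
    fun x => -3071/36 + 400 * x 0 + (370/3) * x 1 + (370/3) * x 2
      - 400 * x 0 * x 1 - 400 * x 0 * x 2 - 400 * x 0 ^ 2,
    fun x => 1369/36 - (370/3) * x 0 - (370/3) * x 1 + 400 * x 0 * x 1,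
    fun x => -3071/36 + (370/3) * x 0 + 400 * x 1 + (370/3) * x 2
      - 400 * x 0 * x 1 - 400 * x 1 * x 2 - 400 * x 1 ^ 2,
    fun x => 83/12 - 10 * x 0 - 10 * x 1 + (800/3) * x 2
      - 400 * x 0 * x 2 - 400 * x 1 * x 2 - 400 * x 2 ^ 2,
    fun x => -37/12 + 10 * x 0 - (370/3) * x 2 + 400 * x 0 * x 2,
    fun x => -37/12 + 10 * x 1 - (370/3) * x 2 + 400 * x 1 * x 2]

/-- The ten QM evaluation points. -/
noncomputable def ptQM : Fin 10 → Fin 3 → ℝ :=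
  ![![37/120, 37/120, -1/40], ![49/120, 37/120, -1/40],
    ![37/120, 49/120, -1/40], ![37/120, 37/120, 3/40],
    ![43/120, 37/120, -1/40], ![43/120, 43/120, -1/40],
    ![37/120, 43/120, -1/40], ![37/120, 37/120, 1/40],
    ![43/120, 37/120, 1/40], ![37/120, 43/120, 1/40]]

/-- The isoparametric map of the wedge element with nodal positions `X`. -/
noncomputable def wedgeMap (X : Fin 15 → Fin 3 → ℝ) (u : Fin 3 → ℝ) : Fin 3 → ℝ :=
  fun m => ∑ i : Fin 15, wedgeShape i u * X i m

/-- The Jacobian matrix `J_mn = ∂X_m/∂u_n` of the isoparametric map. -/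
noncomputable def wedgeJac (X : Fin 15 → Fin 3 → ℝ) (u : Fin 3 → ℝ) :
    Matrix (Fin 3) (Fin 3) ℝ :=
  Matrix.of fun m n => fderiv ℝ (fun v => wedgeMap X v m) u (Pi.single n 1)

/-- The metric (Jacobian determinant) of the isoparametric map. -/
noncomputable def wedgeMetric (X : Fin 15 → Fin 3 → ℝ) (u : Fin 3 → ℝ) : ℝ :=
  (wedgeJac X u).det

/-- the wedge shape functions reproduce affine fields. -/
theorem wedgeShape_affine_reproduction (L : (Fin 3 → ℝ) →ᵃ[ℝ] ℝ) (x : Fin 3 → ℝ) :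
    ∑ i : Fin 15, wedgeShape i x * L (wedgeNode i) = L x := by
  have hL : ∀ y : Fin 3 → ℝ, L y = y 0 * L.linear (Pi.single 0 1)
      + y 1 * L.linear (Pi.single 1 1) + y 2 * L.linear (Pi.single 2 1) + L 0 := by
    intro y
    have h1 : L y = L.linear y + L 0 := by
      have := L.map_vadd 0 y
      simpa using this
    have h2 : L.linear y = ∑ i : Fin 3, y i * L.linear (Pi.single i 1) := by
      have := LinearMap.pi_apply_eq_sum_univ L.linear y
      rw [this]
      refine Finset.sum_congr rfl fun i _ => ?_
      rw [smul_eq_mul]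
      congr 2
      ext j
      simp [Pi.single_apply, eq_comm]
    rw [h1, h2, Fin.sum_univ_three]
  generalize L.linear (Pi.single 0 1) = a at hL
  generalize L.linear (Pi.single 1 1) = b at hL
  generalize L.linear (Pi.single 2 1) = c at hL
  generalize L 0 = d at hL
  simp only [hL]
  simp only [Fin.sum_univ_succ, wedgeShape, wedgeNode]
  simp
  ring
end

section
/- For arbitrary nodal positions X_1,…,X_15 ∈ ℝ³ of the fifteen-node wedge element, the metric J(ξ,η,ζ) = det(J_mn) is a polynomial in (ξ,η,ζ) whose every monomial ξ^a η^b ζ^c satisfies a + b ≤ 4, c ≤ 5, and a + b + c ≤ 6; in particular the metric has total degree at most 6. -/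
open MeasureTheory MvPolynomial

/-- Support bounds: `a + b ≤ A`, `c ≤ C`, `a + b + c ≤ T` for every monomial. -/
def WB (A C T : ℕ) (p : MvPolynomial (Fin 3) ℝ) : Prop :=
  ∀ d ∈ p.support, d 0 + d 1 ≤ A ∧ d 2 ≤ C ∧ d 0 + d 1 + d 2 ≤ T

theorem WB.mono {A C T A' C' T' : ℕ} {p : MvPolynomial (Fin 3) ℝ} (h : WB A C T p)
    (hA : A ≤ A') (hC : C ≤ C') (hT : T ≤ T') : WB A' C' T' p := by
  intro d hd
  have := h d hd
  omega

theorem WB.add {A C T : ℕ} {p q : MvPolynomial (Fin 3) ℝ} (hp : WB A C T p)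
    (hq : WB A C T q) : WB A C T (p + q) := by
  intro d hd
  rcases Finset.mem_union.1 (MvPolynomial.support_add hd) with h | h
  · exact hp d h
  · exact hq d h

theorem WB.neg {A C T : ℕ} {p : MvPolynomial (Fin 3) ℝ} (hp : WB A C T p) :
    WB A C T (-p) := by
  intro d hd
  rw [MvPolynomial.support_neg] at hd
  exact hp d hd

theorem WB.sub {A C T : ℕ} {p q : MvPolynomial (Fin 3) ℝ} (hp : WB A C T p)
    (hq : WB A C T q) : WB A C T (p - q) := by
  rw [sub_eq_add_neg]
  exact hp.add hq.neg

theorem WB.mul {A C T A' C' T' : ℕ} {p q : MvPolynomial (Fin 3) ℝ} (hp : WB A C T p)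
    (hq : WB A' C' T' q) : WB (A + A') (C + C') (T + T') (p * q) := by
  classical
  intro d hd
  obtain ⟨e, he, f, hf, rfl⟩ := Finset.mem_add.1 (MvPolynomial.support_mul p q hd)
  have h1 := hp e he
  have h2 := hq f hf
  simp only [Finsupp.add_apply]
  omega

theorem WB.sum {ι : Type} {A C T : ℕ} (s : Finset ι) (p : ι → MvPolynomial (Fin 3) ℝ)
    (hp : ∀ i ∈ s, WB A C T (p i)) : WB A C T (∑ i ∈ s, p i) := by
  classical
  intro d hd
  obtain ⟨i, hi, h⟩ := Finset.mem_biUnion.1 (MvPolynomial.support_sum hd)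
  exact hp i hi d h

theorem WB.const (A C T : ℕ) (r : ℝ) : WB A C T (MvPolynomial.C r) := by
  intro d hd
  have : d = 0 := by
    by_contra h
    rw [MvPolynomial.mem_support_iff, MvPolynomial.coeff_C, if_neg (Ne.symm h)] at hd
    exact hd rfl
  subst this
  simp

theorem WB.one (A C T : ℕ) : WB A C T 1 := by
  simpa using WB.const A C T 1

theorem WB.varX (n : Fin 3) (A C T : ℕ) (hA : n ≠ 2 → 1 ≤ A) (hC : n = 2 → 1 ≤ C)
    (hT : 1 ≤ T) : WB A C T (MvPolynomial.X n) := by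
  intro d hd
  rw [MvPolynomial.support_X, Finset.mem_singleton] at hd
  subst hd
  fin_cases n <;> simp at * <;> omega

theorem WB.pderiv {A C T A' C' T' : ℕ} {p : MvPolynomial (Fin 3) ℝ} (n : Fin 3)
    (hp : WB A C T p) (hA : A ≤ A' + (if n = 2 then 0 else 1))
    (hC : C ≤ C' + (if n = 2 then 1 else 0)) (hT : T ≤ T' + 1) :
    WB A' C' T' (MvPolynomial.pderiv n p) := by
  rw [p.as_sum, map_sum]
  refine WB.sum _ _ fun d hd e he => ?_
  rw [MvPolynomial.pderiv_monomial] at he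
  have h1 := MvPolynomial.support_monomial_subset he
  rw [Finset.mem_singleton] at h1
  have h2 : d n ≠ 0 := by
    intro h0
    simp [h0] at he
  subst h1
  have h3 := hp d hd
  fin_cases n <;> simp at * <;> omega

theorem hasFDerivAt_eval (p : MvPolynomial (Fin 3) ℝ) (u : Fin 3 → ℝ) :
    HasFDerivAt (fun v => MvPolynomial.eval v p)
      (∑ n, MvPolynomial.eval u (MvPolynomial.pderiv n p) •
        (ContinuousLinearMap.proj n : (Fin 3 → ℝ) →L[ℝ] ℝ)) u := by
  induction p using MvPolynomial.induction_on with
  | C a => simpa using hasFDerivAt_const a u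
  | add p q hp hq =>
    simp only [map_add, add_smul, Finset.sum_add_distrib]
    exact hp.add hq
  | mul_X p i hp =>
    have h := hp.mul (ContinuousLinearMap.proj i : (Fin 3 → ℝ) →L[ℝ] ℝ).hasFDerivAt
    simp only [map_mul, MvPolynomial.eval_X]
    refine h.congr_fderiv ?_
    ext v
    fin_cases i <;>
      simp [Fin.sum_univ_three, MvPolynomial.pderiv_X, Pi.single_apply] <;> ring

/-- The shape functions as polynomials. -/
noncomputable def shapePoly : Fin 15 → MvPolynomial (Fin 3) ℝ :=
  let x : MvPolynomial (Fin 3) ℝ := MvPolynomial.X 0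
  let y : MvPolynomial (Fin 3) ℝ := MvPolynomial.X 1
  let z : MvPolynomial (Fin 3) ℝ := MvPolynomial.X 2
  let k : ℝ → MvPolynomial (Fin 3) ℝ := MvPolynomial.C
  ![k (-1/2) * ((1 - x - y) * (1 - z) * (k 2 * x + k 2 * y + z)),
    k (1/2) * (x * (1 - z) * (k 2 * x - z - k 2)),
    k (1/2) * (y * (1 - z) * (k 2 * y - z - k 2)),
    k (-1/2) * ((1 - x - y) * (1 + z) * (k 2 * x + k 2 * y - z)),
    k (1/2) * (x * (1 + z) * (k 2 * x + z - k 2)),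
    k (1/2) * (y * (1 + z) * (k 2 * y + z - k 2)),
    k 2 * (x * (1 - x - y) * (1 - z)),
    k 2 * (x * y * (1 - z)),
    k 2 * (y * (1 - x - y) * (1 - z)),
    k 2 * (x * (1 - x - y) * (1 + z)),
    k 2 * (x * y * (1 + z)),
    k 2 * (y * (1 - x - y) * (1 + z)),
    (1 - x - y) * (1 - z * z),
    x * (1 - z * z),
    y * (1 - z * z)]

theorem eval_shapePoly (i : Fin 15) (u : Fin 3 → ℝ) :
    MvPolynomial.eval u (shapePoly i) = wedgeShape i u := by
  fin_cases i <;> simp [shapePoly, wedgeShape, -mul_eq_mul_left_iff] <;> ring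

theorem WB.smulC {A C T : ℕ} {p : MvPolynomial (Fin 3) ℝ} (r : ℝ) (hp : WB A C T p) :
    WB A C T (MvPolynomial.C r * p) := by
  simpa using (WB.const 0 0 0 r).mul hp

theorem WB_shapePoly (i : Fin 15) : WB 2 2 3 (shapePoly i) := by
  have x : WB 1 0 1 (MvPolynomial.X 0) := WB.varX 0 1 0 1 (by simp) (by simp) le_rfl
  have y : WB 1 0 1 (MvPolynomial.X 1) := WB.varX 1 1 0 1 (by simp) (by simp) le_rfl
  have z : WB 0 1 1 (MvPolynomial.X 2) := WB.varX 2 0 1 1 (by simp) (by simp) le_rfl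
  have x' : WB 1 1 1 (MvPolynomial.X 0) := x.mono (by simp) (by simp) le_rfl
  have y' : WB 1 1 1 (MvPolynomial.X 1) := y.mono (by simp) (by simp) le_rfl
  have z' : WB 1 1 1 (MvPolynomial.X 2) := z.mono (by simp) (by simp) le_rfl
  have c2 : WB 1 1 1 (MvPolynomial.C 2) := WB.const _ _ _ _
  have l := ((WB.one 1 0 1).sub x).sub y
  have m := (WB.one 0 1 1).sub z
  have m' := (WB.one 0 1 1).add z
  have q := (WB.one 0 2 2).sub (z.mul z)
  fin_cases i
  · exact ((l.mul m).mul (((x'.smulC 2).add (y'.smulC 2)).add z')).smulC _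
  · exact ((x.mul m).mul (((x'.smulC 2).sub z').sub c2)).smulC _
  · exact ((y.mul m).mul (((y'.smulC 2).sub z').sub c2)).smulC _
  · exact ((l.mul m').mul (((x'.smulC 2).add (y'.smulC 2)).sub z')).smulC _
  · exact ((x.mul m').mul (((x'.smulC 2).add z').sub c2)).smulC _
  · exact ((y.mul m').mul (((y'.smulC 2).add z').sub c2)).smulC _
  · exact (((x.mul l).mul m).smulC _).mono (by simp) (by simp) (by simp)
  · exact (((x.mul y).mul m).smulC _).mono (by simp) (by simp) (by simp)
  · exact (((y.mul l).mul m).smulC _).mono (by simp) (by simp) (by simp)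
  · exact (((x.mul l).mul m').smulC _).mono (by simp) (by simp) (by simp)
  · exact (((x.mul y).mul m').smulC _).mono (by simp) (by simp) (by simp)
  · exact (((y.mul l).mul m').smulC _).mono (by simp) (by simp) (by simp)
  · exact (l.mul q).mono (by simp) (by simp) (by simp)
  · exact (x.mul q).mono (by simp) (by simp) (by simp)
  · exact (y.mul q).mono (by simp) (by simp) (by simp)

/-- The components of the isoparametric map as polynomials. -/
noncomputable def mapPoly (X : Fin 15 → Fin 3 → ℝ) (m : Fin 3) : MvPolynomial (Fin 3) ℝ :=
  ∑ i, MvPolynomial.C (X i m) * shapePoly i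

theorem wedgeJac_apply (X : Fin 15 → Fin 3 → ℝ) (u : Fin 3 → ℝ) (m n : Fin 3) :
    wedgeJac X u m n = MvPolynomial.eval u (MvPolynomial.pderiv n (mapPoly X m)) := by
  have h : (fun v => wedgeMap X v m) = fun v => MvPolynomial.eval v (mapPoly X m) := by
    funext v
    simp only [wedgeMap, mapPoly, map_sum, map_mul, MvPolynomial.eval_C, eval_shapePoly]
    exact Finset.sum_congr rfl fun i _ => mul_comm _ _
  rw [wedgeJac, Matrix.of_apply, h, (hasFDerivAt_eval _ u).fderiv]
  simp [Pi.single_apply]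

/-- the metric is a polynomial whose monomials `ξ^a η^b ζ^c` satisfy
`a + b ≤ 4`, `c ≤ 5` and `a + b + c ≤ 6`; in particular it has total degree at most 6. -/
theorem wedgeMetric_is_polynomial (X : Fin 15 → Fin 3 → ℝ) :
    ∃ p : MvPolynomial (Fin 3) ℝ,
      (∀ d ∈ p.support, d 0 + d 1 ≤ 4 ∧ d 2 ≤ 5 ∧ d 0 + d 1 + d 2 ≤ 6) ∧
      p.totalDegree ≤ 6 ∧
      ∀ u : Fin 3 → ℝ, wedgeMetric X u = MvPolynomial.eval u p := by
  have hm : ∀ m, WB 2 2 3 (mapPoly X m) := fun m =>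
    WB.sum _ _ fun i _ => (WB_shapePoly i).smulC _
  let q : Fin 3 → Fin 3 → MvPolynomial (Fin 3) ℝ :=
    fun m n => MvPolynomial.pderiv n (mapPoly X m)
  have h0 : ∀ m, WB 1 2 2 (q m 0) := fun m => (hm m).pderiv 0 (by simp) (by simp) (by simp)
  have h1 : ∀ m, WB 1 2 2 (q m 1) := fun m => (hm m).pderiv 1 (by simp) (by simp) (by simp)
  have h2 : ∀ m, WB 2 1 2 (q m 2) := fun m => (hm m).pderiv 2 (by simp) (by simp) (by simp)
  have h3 : ∀ a b c, WB 4 5 6 (q a 0 * q b 1 * q c 2) := fun a b c =>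
    ((h0 a).mul (h1 b)).mul (h2 c)
  have hp : WB 4 5 6 (q 0 0 * q 1 1 * q 2 2 - q 0 0 * q 2 1 * q 1 2 - q 1 0 * q 0 1 * q 2 2
      + q 2 0 * q 0 1 * q 1 2 + q 1 0 * q 2 1 * q 0 2 - q 2 0 * q 1 1 * q 0 2) :=
    (((((h3 _ _ _).sub (h3 _ _ _)).sub (h3 _ _ _)).add (h3 _ _ _)).add (h3 _ _ _)).sub
      (h3 _ _ _)
  refine ⟨_, hp, ?_, fun u => ?_⟩
  · refine Finset.sup_le fun d hd => ?_
    have := (hp d hd).2.2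
    rw [Finsupp.sum_fintype _ _ (fun _ => rfl), Fin.sum_univ_three]
    exact this
  · rw [wedgeMetric, Matrix.det_fin_three]
    simp only [wedgeJac_apply, map_add, map_sub, map_mul, q]
    ring
end

section
/- The quadratic-metric (QM) interpolation reproduces quadratic fields exactly: for every polynomial q in three variables of total degree at most 2 and every x ∈ ℝ³, Σ_{k=1}^{10} φ_QM^k(x) · q(p_k) = q(x). -/
open MeasureTheory MvPolynomial

/-- Reproduction of the monomials of degree at most two. -/
theorem phiQM_monomial_aux (a b c : ℕ) (h : a + b + c ≤ 2) (x : Fin 3 → ℝ) :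
    ∑ k : Fin 10, phiQM k x * (ptQM k 0 ^ a * ptQM k 1 ^ b * ptQM k 2 ^ c) =
      x 0 ^ a * x 1 ^ b * x 2 ^ c := by
  have ha : a ≤ 2 := by omega
  have hb : b ≤ 2 := by omega
  have hc : c ≤ 2 := by omega
  interval_cases a <;> interval_cases b <;> interval_cases c <;>
    first
    | (exfalso; omega)
    | (simp [Fin.sum_univ_succ, phiQM, ptQM]; ring)

/-- the QM interpolation reproduces quadratic polynomials exactly. -/
theorem phiQM_quadratic_reproduction (q : MvPolynomial (Fin 3) ℝ)
    (hq : q.totalDegree ≤ 2) (x : Fin 3 → ℝ) :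
    ∑ k : Fin 10, phiQM k x * MvPolynomial.eval (ptQM k) q =
      MvPolynomial.eval x q := by 
  simp only [MvPolynomial.eval_eq', Finset.mul_sum]
  rw [Finset.sum_comm]
  refine Finset.sum_congr rfl fun d hd => ?_
  have h1 := (MvPolynomial.le_totalDegree hd).trans hq
  rw [Finsupp.sum_fintype _ _ (fun _ => rfl), Fin.sum_univ_three] at h1
  simp only [Fin.prod_univ_three]
  rw [← phiQM_monomial_aux _ _ _ h1 x, Finset.mul_sum]
  refine Finset.sum_congr rfl fun k _ => ?_
  ring
end

section
/- The ten-point QM mass-matrix integration rule is exact whenever the metric is a quadratic polynomial: for every polynomial g in three variables of total degree at most 2 and all i, j ∈ {1,…,15}, ∫_W φ^i φ^j g dV = Σ_{k=1}^{10} (∫_W φ^i φ^j φ_QM^k dV) · g(p_k), where the integrals are with respect to Lebesgue measure on W. -/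
open MeasureTheory MvPolynomial

lemma monomial_reproduce (a b c : ℕ) (h : a + b + c ≤ 2) (x : Fin 3 → ℝ) :
    x 0 ^ a * x 1 ^ b * x 2 ^ c =
      ∑ k : Fin 10, phiQM k x * (ptQM k 0 ^ a * ptQM k 1 ^ b * ptQM k 2 ^ c) := by
  have ha : a ≤ 2 := by omega
  have hb : b ≤ 2 := by omega
  have hc : c ≤ 2 := by omega
  interval_cases a <;> interval_cases b <;> interval_cases c <;>
    first
    | (exfalso; omega)
    | (simp [Fin.sum_univ_succ, phiQM, ptQM]; ring)

lemma eval_reproduce (g : MvPolynomial (Fin 3) ℝ) (hg : g.totalDegree ≤ 2) (x : Fin 3 → ℝ) :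
    MvPolynomial.eval x g = ∑ k : Fin 10, phiQM k x * MvPolynomial.eval (ptQM k) g := by
  simp only [MvPolynomial.eval_eq', Finset.mul_sum]
  rw [Finset.sum_comm]
  refine Finset.sum_congr rfl fun d hd => ?_
  have h1 : d 0 + d 1 + d 2 ≤ 2 := by
    have := (MvPolynomial.le_totalDegree hd).trans hg
    rw [Finsupp.sum_fintype _ _ (fun _ => rfl)] at this
    simpa [Fin.sum_univ_three] using this
  simp only [Fin.prod_univ_three]
  rw [monomial_reproduce _ _ _ h1 x, Finset.mul_sum]
  exact Finset.sum_congr rfl fun k _ => by ring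

lemma wedgeShape_continuous (i : Fin 15) : Continuous (wedgeShape i) := by
  fin_cases i <;> simp [wedgeShape] <;> fun_prop

lemma phiQM_continuous (k : Fin 10) : Continuous (phiQM k) := by
  fin_cases k <;> simp [phiQM] <;> fun_prop

lemma wedgeDomain_isCompact : IsCompact wedgeDomain := by
  have hsub : wedgeDomain ⊆ Set.Icc (fun _ => -1) (fun _ => 1) := by
    rintro x ⟨h0, h1, h2, h3, h4⟩
    constructor <;> intro m <;> fin_cases m <;> simp <;> linarith
  refine isCompact_Icc.of_isClosed_subset ?_ hsub
  unfold wedgeDomain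
  refine IsClosed.and (isClosed_le ?_ ?_) <| IsClosed.and (isClosed_le ?_ ?_) <|
    IsClosed.and (isClosed_le ?_ ?_) <| IsClosed.and (isClosed_le ?_ ?_) (isClosed_le ?_ ?_) <;>
    fun_prop

/-- the ten-point QM mass-matrix rule is exact for quadratic metrics. -/
theorem QM_rule_exact_for_quadratic_metric (g : MvPolynomial (Fin 3) ℝ)
    (hg : g.totalDegree ≤ 2) (i j : Fin 15) :
    ∫ x in wedgeDomain, wedgeShape i x * wedgeShape j x * MvPolynomial.eval x g =
      ∑ k : Fin 10,
        (∫ x in wedgeDomain, wedgeShape i x * wedgeShape j x * phiQM k x) *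
          MvPolynomial.eval (ptQM k) g := by
  simp only [← integral_mul_const]
  rw [← integral_finset_sum]
  · refine integral_congr_ae (Filter.Eventually.of_forall fun x => ?_)
    simp only
    rw [eval_reproduce g hg x, Finset.mul_sum]
    exact Finset.sum_congr rfl fun k _ => by ring
  · intro k _
    have hc : Continuous fun x => wedgeShape i x * wedgeShape j x * phiQM k x *
        MvPolynomial.eval (ptQM k) g :=
      (((wedgeShape_continuous i).mul (wedgeShape_continuous j)).mul
        (phiQM_continuous k)).mul continuous_const
    exact hc.continuousOn.integrableOn_compact wedgeDomain_isCompact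
end

section
/- The four-point LM mass-matrix integration rule is exact whenever the metric is an affine function: for every affine map g : ℝ³ → ℝ and all i, j ∈ {1,…,15}, ∫_W φ^i φ^j g dV = Σ_{k=1}^{4} (∫_W φ^i φ^j φ_LM^k dV) · g(p_k), where the integrals are with respect to Lebesgue measure on W. -/
open MeasureTheory MvPolynomial

lemma phiLM_continuous (k : Fin 4) : Continuous (phiLM k) := by
  fin_cases k <;> simp only [phiLM] <;> simp <;> fun_prop

lemma affine_eq_sum_phiLM (g : (Fin 3 → ℝ) →ᵃ[ℝ] ℝ) (x : Fin 3 → ℝ) :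
    g x = ∑ k : Fin 4, phiLM k x * g (ptLM k) := by
  have hg : ∀ y : Fin 3 → ℝ, g y = g.linear (Pi.single 0 1) * y 0
      + g.linear (Pi.single 1 1) * y 1 + g.linear (Pi.single 2 1) * y 2 + g 0 := by
    intro y
    have h1 : g y = g.linear y + g 0 := congrFun g.decomp y
    rw [h1, LinearMap.pi_apply_eq_sum_univ g.linear y, Fin.sum_univ_three]
    have e : ∀ i : Fin 3, (fun j => if i = j then (1 : ℝ) else 0) = Pi.single i 1 := by
      intro i
      ext j
      simp [Pi.single_apply, eq_comm]
    simp only [e, smul_eq_mul]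
    ring
  rw [hg x, Fin.sum_univ_four, hg (ptLM 0), hg (ptLM 1), hg (ptLM 2), hg (ptLM 3)]
  simp [phiLM, ptLM]
  ring

/-- the four-point LM mass-matrix rule is exact for affine metrics. -/
theorem LM_rule_exact_for_affine_metric (g : (Fin 3 → ℝ) →ᵃ[ℝ] ℝ) (i j : Fin 15) :
    ∫ x in wedgeDomain, wedgeShape i x * wedgeShape j x * g x =
      ∑ k : Fin 4,
        (∫ x in wedgeDomain, wedgeShape i x * wedgeShape j x * phiLM k x) *
          g (ptLM k) := by 
  have hint : ∀ k : Fin 4, Integrable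
      (fun x => wedgeShape i x * wedgeShape j x * phiLM k x * g (ptLM k))
      (volume.restrict wedgeDomain) := by
    intro k
    have hi := wedgeShape_continuous i
    have hj := wedgeShape_continuous j
    have hk := phiLM_continuous k
    exact (((hi.mul hj).mul hk).mul continuous_const).continuousOn.integrableOn_compact
      wedgeDomain_isCompact
  simp only [← integral_mul_const]
  rw [← integral_finsetSum _ (fun k _ => hint k)]
  congr 1
  ext x
  rw [affine_eq_sum_phiLM g x, Finset.mul_sum]
  exact Finset.sum_congr rfl fun k _ => by ring
end
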